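/- The set α = {(1/2,1/4), (1/6,11/12), (5/6,11/12)} is an optimal set of three-means for P with quantization error V₃ = 5/96. -/

import Mathlib

open MeasureTheory ProbabilityTheory
open scoped ENNReal

noncomputable section

abbrev E2 : Type := EuclideanSpace ℝ (Fin 2)

/-- The point (a,b) of the Euclidean plane. -/
def pt (a b : ℝ) : E2 := (WithLp.equiv 2 (Fin 2 → ℝ)).symm ![a, b]

/-- The four generating similarities S₁,…,S₄ (indexed 0,…,3) of the Sierpiński carpet. -/
def S : Fin 4 → E2 → E2
  | 0 => fun x => pt (x 0 / 3) (x 1 / 3)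
  | 1 => fun x => pt (x 0 / 3 + 2/3) (x 1 / 3)
  | 2 => fun x => pt (x 0 / 3) (x 1 / 3 + 2/3)
  | 3 => fun x => pt (x 0 / 3 + 2/3) (x 1 / 3 + 2/3)

/-- The self-affinity equation P = (1/8)P∘S₁⁻¹ + (1/8)P∘S₂⁻¹ + (3/8)P∘S₃⁻¹ + (3/8)P∘S₄⁻¹. -/
def carpetEq (P : Measure E2) : Prop :=
  P = (1/8 : ℝ≥0∞) • P.map (S 0) + (1/8 : ℝ≥0∞) • P.map (S 1)
    + (3/8 : ℝ≥0∞) • P.map (S 2) + (3/8 : ℝ≥0∞) • P.map (S 3)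

/-- The unit square [0,1]². -/
def unitSq : Set E2 := {x | ∀ i, x i ∈ Set.Icc (0:ℝ) 1}

/-- S_ω = S_{ω₁} ∘ ⋯ ∘ S_{ω_k} for a word ω. -/
def Sw (w : List (Fin 4)) : E2 → E2 := fun x => w.foldr S x

/-- The basic square J_ω = S_ω([0,1]²). -/
def Jw (w : List (Fin 4)) : Set E2 := Sw w '' unitSq

/-- The basic square J_i of the first level. -/
def Jset (i : Fin 4) : Set E2 := S i '' unitSq

/-- The mass centroid (conditional expectation) of P on a set A. -/
def ctr (P : Measure E2) (A : Set E2) : E2 := (P A).toReal⁻¹ • ∫ x in A, x ∂P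

/-- E(ω) : distortion error on J_ω about its centroid a(ω) = S_ω(1/2,3/4). -/
def Err (P : Measure E2) (w : List (Fin 4)) : ℝ :=
  ∫ x in Jw w, ‖x - Sw w (pt (1/2) (3/4))‖^2 ∂P

/-- E(ωi, ωj) : distortion error on J_{ωi} ∪ J_{ωj} about its centroid. -/
def Epair (P : Measure E2) (w : List (Fin 4)) (i j : Fin 4) : ℝ :=
  ∫ x in (Jw (w ++ [i]) ∪ Jw (w ++ [j])),
    ‖x - ctr P (Jw (w ++ [i]) ∪ Jw (w ++ [j]))‖^2 ∂P

/-!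
The squared distance to a finite set of centres is `‖x‖²` plus a concave function. Interpolating
bilinearly between the corners of a first-level square `Jset k` therefore bounds it from below, up
to an error that does not depend on the centres and has mean `7/288`. Under `P` the four bilinear
weights have mean `1/8, 1/8, 3/8, 3/8`, so what remains is a weighted problem on the sixteen points
`S k (corner l)`.

That finite problem is a facility location problem, and linear programming duality bounds it one
centre at a time: if every grid point offers a rent, and no single centre is ever offered more than
`88` beyond its connection costs, then `n` centres cost at least the total rent `440` minus `88 n`.
For one centre, each grid point either pays its rent or its connection cost; every such choice gives
a paraboloid in the centre, whose nonnegativity is a discriminant condition. For `n = 3` the value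
is `440 - 264 = 176`, which the three centres of the theorem attain.
-/

section IteratedFunctionSystem

open Metric Filter Topology
open scoped NNReal

variable {ι X : Type*} [Fintype ι]

/-- The measure `P` is invariant under the iterated function system `T` with weights `p`, that is,
`P = ∑ i, p i • P ∘ (T i)⁻¹`. -/
def IsSelfSimilar [MeasurableSpace X] (P : Measure X) (p : ι → ℝ≥0∞) (T : ι → X → X) : Prop :=
  P = ∑ i, p i • P.map (T i)

theorem infDist_le_of_lipschitzWith_of_mapsTo [PseudoMetricSpace X] {A : Set X} {f : X → X}
    {K : ℝ≥0} (hf : LipschitzWith K f) (hA : A.Nonempty) (hfA : Set.MapsTo f A A) (x : X) :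
    infDist (f x) A ≤ K * infDist x A := by
  have := hA.to_subtype
  rw [infDist_eq_iInf (x := x), Real.mul_iInf_of_nonneg K.coe_nonneg]
  exact le_ciInf fun y => (infDist_le_dist_of_mem (hfA y.2)).trans (hf.dist_le_mul x y)

namespace IsSelfSimilar

section Measurable

variable [MeasurableSpace X] {P : Measure X} {p : ι → ℝ≥0∞} {T : ι → X → X}

theorem measure_eq_sum (hP : IsSelfSimilar P p T) (hT : ∀ i, Measurable (T i)) {s : Set X}
    (hs : MeasurableSet s) : P s = ∑ i, p i * P (T i ⁻¹' s) := by
  conv_lhs => rw [hP]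
  simp [Measure.finsetSum_apply, Measure.map_apply (hT _) hs]

theorem measure_le_of_preimage_subset (hP : IsSelfSimilar P p T) (hp : ∑ i, p i ≤ 1)
    (hT : ∀ i, Measurable (T i)) {s t : Set X} (hs : MeasurableSet s)
    (hst : ∀ i, T i ⁻¹' s ⊆ t) : P s ≤ P t :=
  calc P s = ∑ i, p i * P (T i ⁻¹' s) := hP.measure_eq_sum hT hs
    _ ≤ ∑ i, p i * P t := by gcongr with i; exact hst i
    _ = (∑ i, p i) * P t := (Finset.sum_mul ..).symm
    _ ≤ P t := mul_le_of_le_one_left' hp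

theorem integral_eq_sum (hP : IsSelfSimilar P p T) (hp : ∀ i, p i ≠ ∞)
    (hT : ∀ i, Measurable (T i)) {E : Type*} [NormedAddCommGroup E] [NormedSpace ℝ E] {f : X → E}
    (hf : StronglyMeasurable f) (hfT : ∀ i, Integrable (fun x => f (T i x)) P) :
    ∫ x, f x ∂P = ∑ i, (p i).toReal • ∫ x, f (T i x) ∂P := by
  have hint (i : ι) : Integrable f (p i • P.map (T i)) :=
    ((integrable_map_measure hf.aestronglyMeasurable (hT i).aemeasurable).2
      (hfT i)).smul_measure (hp i)
  conv_lhs => rw [hP, integral_finsetSum_measure fun i _ => hint i]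
  simp only [integral_smul_measure,
    integral_map (hT _).aemeasurable hf.aestronglyMeasurable]

end Measurable

variable [PseudoMetricSpace X] [MeasurableSpace X] [BorelSpace X] {P : Measure X}
  {p : ι → ℝ≥0∞} {T : ι → X → X} {K : ℝ≥0} {A : Set X}

theorem measure_le_infDist_le_pow (hP : IsSelfSimilar P p T) (hp : ∑ i, p i ≤ 1)
    (hT : ∀ i, LipschitzWith K (T i)) (hA : A.Nonempty) (hTA : ∀ i, Set.MapsTo (T i) A A)
    (ε : ℝ) (n : ℕ) : P {x | ε ≤ infDist x A} ≤ P {x | ε ≤ K ^ n * infDist x A} := by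
  induction n with
  | zero => simp
  | succ n ih =>
    refine ih.trans (hP.measure_le_of_preimage_subset hp (fun i => (hT i).continuous.measurable)
      (measurableSet_le measurable_const (by fun_prop)) fun i x hx => ?_)
    calc ε ≤ K ^ n * infDist (T i x) A := hx
      _ ≤ K ^ n * (K * infDist x A) := by
        gcongr; exact infDist_le_of_lipschitzWith_of_mapsTo (hT i) hA (hTA i) x
      _ = K ^ (n + 1) * infDist x A := by ring

theorem ae_mem [IsFiniteMeasure P] (hP : IsSelfSimilar P p T) (hp : ∑ i, p i ≤ 1)
    (hT : ∀ i, LipschitzWith K (T i)) (hK : K < 1) (hA : A.Nonempty) (hAc : IsClosed A)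
    (hTA : ∀ i, Set.MapsTo (T i) A A) : ∀ᵐ x ∂P, x ∈ A := by
  have hlim : TendstoInMeasure P (fun n x => (K : ℝ) ^ n * infDist x A) atTop fun _ => 0 := by
    refine tendstoInMeasure_of_tendsto_ae (fun n => by fun_prop) (ae_of_all _ fun x => ?_)
    simpa using (tendsto_pow_atTop_nhds_zero_of_lt_one K.coe_nonneg
      (NNReal.coe_lt_one.2 hK)).mul_const (infDist x A)
  have hzero (ε : ℝ) (hε : 0 < ε) : P {x | ε ≤ infDist x A} = 0 := by
    refine le_antisymm (ge_of_tendsto' (tendstoInMeasure_iff_norm.1 hlim ε hε) fun n => ?_)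
      zero_le
    have hnorm (x : X) : ‖(K : ℝ) ^ n * infDist x A - 0‖ = K ^ n * infDist x A := by
      rw [sub_zero, Real.norm_of_nonneg (mul_nonneg (by positivity) infDist_nonneg)]
    simpa only [hnorm] using hP.measure_le_infDist_le_pow hp hT hA hTA ε n
  have hae : ∀ᵐ x ∂P, ∀ n : ℕ, infDist x A < 1 / (n + 1) :=
    ae_all_iff.2 fun n => by
      simpa only [ae_iff, not_lt] using hzero (1 / (n + 1)) Nat.one_div_pos_of_nat
  filter_upwards [hae] with x hx
  exact (hAc.mem_iff_infDist_zero hA).2 (le_antisymm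
    (ge_of_tendsto' tendsto_one_div_add_atTop_nhds_zero_nat fun n => (hx n).le) infDist_nonneg)

end IsSelfSimilar

theorem integrable_of_continuous_of_ae_mem_isCompact {X E : Type*} [TopologicalSpace X] [T2Space X]
    [MeasurableSpace X] [OpensMeasurableSpace X] [NormedAddCommGroup E] {P : Measure X}
    [IsFiniteMeasureOnCompacts P] {A : Set X} {f : X → E} (hf : Continuous f) (hA : IsCompact A)
    (hPA : ∀ᵐ x ∂P, x ∈ A) : Integrable f P := by
  rw [← Measure.restrict_eq_self_of_ae_mem hPA]
  exact hf.continuousOn.integrableOn_compact hA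

end IteratedFunctionSystem

section NearestPoint

variable {E : Type*} [NormedAddCommGroup E]

/-- The squared distance from `x` to the nearest centre in `β`. -/
def nearestSqDist (β : Finset E) (hβ : β.Nonempty) (x : E) : ℝ := β.inf' hβ fun c => ‖x - c‖ ^ 2

theorem continuous_nearestSqDist (β : Finset E) (hβ : β.Nonempty) :
    Continuous (nearestSqDist β hβ) :=
  Continuous.finset_inf'_apply hβ fun c _ => by fun_prop

variable {ι : Type*} [Fintype ι] [InnerProductSpace ℝ E] {b : ι → ℝ} {p : ι → E}

theorem sum_mul_norm_sub_sq (hb : ∑ i, b i = 1) (c : E) :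
    ∑ i, b i * ‖p i - c‖ ^ 2 =
      ‖∑ i, b i • p i - c‖ ^ 2 + ∑ i, b i * ‖p i - ∑ j, b j • p j‖ ^ 2 := by
  set x := ∑ i, b i • p i with hx
  have hcross : ∑ i, b i * inner ℝ (p i - x) (x - c) = 0 := by
    simp only [← real_inner_smul_left, ← sum_inner, smul_sub, Finset.sum_sub_distrib,
      ← Finset.sum_smul, hb, one_smul, ← hx, sub_self, inner_zero_left]
  calc ∑ i, b i * ‖p i - c‖ ^ 2
      = ∑ i, (b i * ‖x - c‖ ^ 2 + b i * ‖p i - x‖ ^ 2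
          + 2 * (b i * inner ℝ (p i - x) (x - c))) := by
        refine Finset.sum_congr rfl fun i _ => ?_
        rw [← sub_add_sub_cancel (p i) x c, norm_add_sq_real]
        ring
    _ = ‖x - c‖ ^ 2 + ∑ i, b i * ‖p i - x‖ ^ 2 := by
        rw [Finset.sum_add_distrib, Finset.sum_add_distrib, ← Finset.sum_mul, ← Finset.mul_sum,
          hb, hcross, one_mul, mul_zero, add_zero]

theorem sum_mul_nearestSqDist_le (hb₀ : ∀ i, 0 ≤ b i) (hb : ∑ i, b i = 1) (β : Finset E)
    (hβ : β.Nonempty) :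
    ∑ i, b i * nearestSqDist β hβ (p i) ≤
      nearestSqDist β hβ (∑ i, b i • p i) + ∑ i, b i * ‖p i - ∑ j, b j • p j‖ ^ 2 := by
  obtain ⟨c, hc, hmin⟩ := β.exists_mem_eq_inf' hβ fun c => ‖∑ i, b i • p i - c‖ ^ 2
  rw [nearestSqDist, hmin, ← sum_mul_norm_sub_sq hb]
  gcongr with i
  · exact hb₀ i
  · exact β.inf'_le _ hc

end NearestPoint

section FacilityLocation

-- Weak duality: the centre serving `i` makes up for its rent, the other centres only add to it.
theorem sum_rent_sub_card_mul_price_le_sum_mul_inf' {ι X : Type*} [Fintype ι] {w : ι → ℝ}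
    {d : ι → X → ℝ} {rent : ι → ℝ} {price : ℝ}
    (hprice : ∀ c, ∑ i, rent i - price ≤ ∑ i, min (rent i) (w i * d i c))
    (β : Finset X) (hβ : β.Nonempty) :
    ∑ i, rent i - β.card * price ≤ ∑ i, w i * β.inf' hβ (d i) := by
  have hpaid (i : ι) : rent i - ∑ c ∈ β, (rent i - min (rent i) (w i * d i c)) ≤
      w i * β.inf' hβ (d i) := by
    obtain ⟨c₀, hc₀, hmin⟩ := β.exists_mem_eq_inf' hβ (d i)
    have hle := Finset.single_le_sum (f := fun c => rent i - min (rent i) (w i * d i c))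
      (fun c _ => sub_nonneg.2 (min_le_left _ _)) hc₀
    rw [hmin]
    linarith [min_le_right (rent i) (w i * d i c₀)]
  calc ∑ i, rent i - β.card * price
      = ∑ i, rent i - ∑ _c ∈ β, price := by rw [Finset.sum_const, nsmul_eq_mul]
    _ ≤ ∑ i, rent i - ∑ c ∈ β, ∑ i, (rent i - min (rent i) (w i * d i c)) := by
        gcongr with c
        rw [Finset.sum_sub_distrib]
        linarith [hprice c]
    _ = ∑ i, (rent i - ∑ c ∈ β, (rent i - min (rent i) (w i * d i c))) := by
        rw [Finset.sum_comm, Finset.sum_sub_distrib]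
    _ ≤ ∑ i, w i * β.inf' hβ (d i) := Finset.sum_le_sum fun i _ => hpaid i

/-- A demand point of a planar facility location problem with integer data: `mass` is the connection
cost per unit of squared distance, `rent` the dual price offered by the point. -/
structure Site where
  x : ℤ
  y : ℤ
  mass : ℕ
  rent : ℕ

/-- The cost of connecting the site `s` to a centre at `(u, v)`. -/
def Site.cost (s : Site) (u v : ℝ) : ℝ := s.mass * ((s.x - u) ^ 2 + (s.y - v) ^ 2)

theorem Site.cost_nonneg (s : Site) (u v : ℝ) : 0 ≤ s.cost u v := by
  unfold Site.cost; positivity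

/-- The coefficients of the circular paraboloid `a (u² + v²) - 2 (b₀ u + b₁ v) + d`. -/
structure Paraboloid where
  a : ℤ
  b₀ : ℤ
  b₁ : ℤ
  d : ℤ

namespace Paraboloid

/-- The value of a paraboloid at `(u, v)`. -/
def eval (q : Paraboloid) (u v : ℝ) : ℝ :=
  q.a * (u ^ 2 + v ^ 2) - 2 * (q.b₀ * u + q.b₁ * v) + q.d

/-- The discriminant condition for a paraboloid to be nonnegative on the whole plane. -/
def IsNonneg (q : Paraboloid) : Prop := 0 ≤ q.a ∧ 0 ≤ q.d ∧ q.b₀ ^ 2 + q.b₁ ^ 2 ≤ q.a * q.d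

instance (q : Paraboloid) : Decidable q.IsNonneg := inferInstanceAs (Decidable (_ ∧ _ ∧ _))

theorem IsNonneg.eval_nonneg {q : Paraboloid} (hq : q.IsNonneg) (u v : ℝ) : 0 ≤ q.eval u v := by
  obtain ⟨ha, hd, hdisc⟩ := hq
  have hdiscR : (q.b₀ : ℝ) ^ 2 + q.b₁ ^ 2 ≤ q.a * q.d := by exact_mod_cast hdisc
  rcases ha.eq_or_lt with ha | ha
  · rw [← ha, zero_mul] at hdisc
    have hb₀ : q.b₀ = 0 := by nlinarith
    have hb₁ : q.b₁ = 0 := by nlinarith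
    simpa [eval, ← ha, hb₀, hb₁] using hd
  · have haR : (0 : ℝ) < q.a := by exact_mod_cast ha
    refine nonneg_of_mul_nonneg_right ?_ haR
    calc 0 ≤ (q.a * u - q.b₀) ^ 2 + (q.a * v - q.b₁) ^ 2
            + (q.a * q.d - (q.b₀ ^ 2 + q.b₁ ^ 2)) := by
          have := sub_nonneg.2 hdiscR
          positivity
      _ = q.a * q.eval u v := by unfold eval; ring

/-- The sum of a paraboloid and the connection cost of a site. -/
def addCost (q : Paraboloid) (s : Site) : Paraboloid :=
  ⟨q.a + s.mass, q.b₀ + s.mass * s.x, q.b₁ + s.mass * s.y, q.d + s.mass * (s.x ^ 2 + s.y ^ 2)⟩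

/-- The sum of a paraboloid and a constant. -/
def addConst (q : Paraboloid) (r : ℤ) : Paraboloid := { q with d := q.d + r }

theorem eval_addCost (q : Paraboloid) (s : Site) (u v : ℝ) :
    (q.addCost s).eval u v = q.eval u v + s.cost u v := by
  simp only [eval, addCost, Site.cost]; push_cast; ring

theorem eval_addConst (q : Paraboloid) (r : ℤ) (u v : ℝ) :
    (q.addConst r).eval u v = q.eval u v + r := by
  simp only [eval, addConst]; push_cast; ring

/-- A sufficient test for `q + ∑ s ∈ l, min s.rent s.cost` to be nonnegative on the plane: branch on
which term attains each minimum, and drop the remaining sites, whose terms are nonnegative, as soon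
as `q` itself is nonnegative. -/
def certify : List Site → Paraboloid → Bool
  | [], q => decide q.IsNonneg
  | s :: l, q => decide q.IsNonneg || (certify l (q.addCost s) && certify l (q.addConst s.rent))

theorem nonneg_of_certify {l : List Site} {q : Paraboloid} (h : certify l q = true) (u v : ℝ) :
    0 ≤ q.eval u v + (l.map fun s => min (s.rent : ℝ) (s.cost u v)).sum := by
  induction l generalizing q with
  | nil => simpa using (of_decide_eq_true h).eval_nonneg u v
  | cons s l ih =>
    rw [certify, Bool.or_eq_true, Bool.and_eq_true, decide_eq_true_eq] at h
    rcases h with hq | ⟨hcost, hrent⟩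
    · refine add_nonneg (hq.eval_nonneg u v) (List.sum_nonneg ?_)
      simp only [List.mem_map, forall_exists_index, and_imp, forall_apply_eq_imp_iff₂]
      exact fun t _ => le_min t.rent.cast_nonneg (t.cost_nonneg u v)
    · rw [List.map_cons, List.sum_cons, ← add_assoc]
      rcases min_choice (s.rent : ℝ) (s.cost u v) with hmin | hmin <;> rw [hmin]
      · simpa [eval_addConst] using ih hrent
      · simpa [eval_addCost] using ih hcost

end Paraboloid

end FacilityLocation

section Carpet

/-- The first coordinate of the corner of `[0, 1]²` fixed by `S k`. -/
def cornerX : Fin 4 → ℤ := ![0, 1, 0, 1]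

/-- The second coordinate of the corner of `[0, 1]²` fixed by `S k`. -/
def cornerY : Fin 4 → ℤ := ![0, 0, 1, 1]

/-- The weights of the self-similar measure, in units of `1/8`. -/
def weight : Fin 4 → ℕ := ![1, 1, 3, 3]

/-- The corner of `[0, 1]²` fixed by `S k`. -/
def corner (k : Fin 4) : E2 := pt (cornerX k) (cornerY k)

@[simp] theorem pt_apply_zero (a b : ℝ) : pt a b 0 = a := rfl

@[simp] theorem pt_apply_one (a b : ℝ) : pt a b 1 = b := rfl

theorem norm_sq_eq (x : E2) : ‖x‖ ^ 2 = x 0 ^ 2 + x 1 ^ 2 := by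
  rw [EuclideanSpace.real_norm_sq_eq, Fin.sum_univ_two]

theorem S_eq_pt (k : Fin 4) (x : E2) :
    S k x = pt ((x 0 + 2 * cornerX k) / 3) ((x 1 + 2 * cornerY k) / 3) := by
  fin_cases k <;> refine congrArg₂ pt ?_ ?_ <;>
    simp only [Fin.zero_eta, Fin.mk_one, Fin.reduceFinMk, cornerX, cornerY, Matrix.cons_val,
      Int.cast_zero, Int.cast_one] <;> ring

theorem S_eq_smul_add (k : Fin 4) (x : E2) :
    S k x = (1 / 3 : ℝ) • x + (2 / 3 : ℝ) • corner k := by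
  ext i
  fin_cases i <;>
    simp only [Fin.zero_eta, Fin.mk_one, S_eq_pt, corner, pt_apply_zero, pt_apply_one,
      PiLp.add_apply, PiLp.smul_apply, smul_eq_mul] <;> ring

theorem lipschitzWith_S (k : Fin 4) : LipschitzWith (1 / 3) (S k) := by
  refine LipschitzWith.of_dist_le_mul fun x y => ?_
  rw [S_eq_smul_add, S_eq_smul_add, dist_add_right, dist_smul₀]
  simp

theorem convex_unitSq : Convex ℝ unitSq := fun _ hx _ hy _ _ ha hb hab i =>
  convex_Icc 0 1 (hx i) (hy i) ha hb hab

theorem corner_mem_unitSq (k : Fin 4) : corner k ∈ unitSq := by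
  intro i
  fin_cases k <;> fin_cases i <;> simp [corner, cornerX, cornerY]

theorem mapsTo_S_unitSq (k : Fin 4) : Set.MapsTo (S k) unitSq unitSq := fun x hx => by
  rw [S_eq_smul_add]
  exact convex_unitSq hx (corner_mem_unitSq k) (by norm_num) (by norm_num) (by norm_num)

theorem isCompact_unitSq : IsCompact unitSq := by
  have hpi : unitSq = EuclideanSpace.equiv (Fin 2) ℝ ⁻¹' Set.univ.pi fun _ => Set.Icc 0 1 := by
    ext x
    simp only [Set.mem_preimage, Set.mem_univ_pi]
    rfl
  rw [hpi]
  exact (EuclideanSpace.equiv (Fin 2) ℝ).toHomeomorph.isCompact_preimage.2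
    (isCompact_univ_pi fun _ => isCompact_Icc)

theorem unitSq_nonempty : unitSq.Nonempty := ⟨corner 0, corner_mem_unitSq 0⟩

/-- The coefficients of the four corners in the bilinear interpolation at `x`. -/
def bilinearWeight (x : E2) : Fin 4 → ℝ :=
  ![(1 - x 0) * (1 - x 1), x 0 * (1 - x 1), (1 - x 0) * x 1, x 0 * x 1]

theorem bilinearWeight_nonneg {x : E2} (hx : x ∈ unitSq) (l : Fin 4) :
    0 ≤ bilinearWeight x l := by
  have hx0 : 0 ≤ 1 - x 0 := sub_nonneg.2 (hx 0).2
  have hx1 : 0 ≤ 1 - x 1 := sub_nonneg.2 (hx 1).2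
  fin_cases l
  exacts [mul_nonneg hx0 hx1, mul_nonneg (hx 0).1 hx1, mul_nonneg hx0 (hx 1).1,
    mul_nonneg (hx 0).1 (hx 1).1]

theorem sum_bilinearWeight (x : E2) : ∑ l, bilinearWeight x l = 1 := by
  simp only [Fin.sum_univ_four, bilinearWeight, Matrix.cons_val]
  ring

theorem sum_bilinearWeight_smul (k : Fin 4) (x : E2) :
    ∑ l, bilinearWeight x l • S k (corner l) = S k x := by
  ext i
  fin_cases i <;>
    simp only [Fin.zero_eta, Fin.mk_one, Fin.sum_univ_four, bilinearWeight, S_eq_pt, corner,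
      cornerX, cornerY, Matrix.cons_val, PiLp.add_apply, PiLp.smul_apply, smul_eq_mul,
      pt_apply_zero, pt_apply_one, Int.cast_zero, Int.cast_one] <;> ring

theorem sum_bilinearWeight_mul_norm_sq (k : Fin 4) (x : E2) :
    ∑ l, bilinearWeight x l * ‖S k (corner l) - S k x‖ ^ 2 =
      (x 0 * (1 - x 0) + x 1 * (1 - x 1)) / 9 := by
  simp only [Fin.sum_univ_four, bilinearWeight, S_eq_pt, corner, cornerX, cornerY, norm_sq_eq,
    Matrix.cons_val, PiLp.sub_apply, pt_apply_zero, pt_apply_one, Int.cast_zero, Int.cast_one]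
  ring

/-- The polynomials spanned by `1`, `x 0`, `x 1`, `x 0 * x 1` and `‖x‖²`, a space invariant under
composition with every `S k`. -/
def quadratic (a b c d e : ℝ) (x : E2) : ℝ :=
  a + b * x 0 + c * x 1 + d * (x 0 * x 1) + e * (x 0 ^ 2 + x 1 ^ 2)

theorem continuous_quadratic (a b c d e : ℝ) : Continuous (quadratic a b c d e) := by
  unfold quadratic; fun_prop

theorem quadratic_S (a b c d e : ℝ) (k : Fin 4) (x : E2) :
    quadratic a b c d e (S k x) =
      quadratic (quadratic a b c d e ((2 / 3 : ℝ) • corner k))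
        ((b + 2 * d * cornerY k / 3 + 4 * e * cornerX k / 3) / 3)
        ((c + 2 * d * cornerX k / 3 + 4 * e * cornerY k / 3) / 3) (d / 9) (e / 9) x := by
  simp only [quadratic, S_eq_pt, corner, PiLp.smul_apply, smul_eq_mul, pt_apply_zero, pt_apply_one]
  ring

theorem sum_bilinearWeight_mul_sub_eq_quadratic (F : Fin 4 → ℝ) (x : E2) :
    ∑ l, bilinearWeight x l * F l - (x 0 * (1 - x 0) + x 1 * (1 - x 1)) / 9 =
      quadratic (F 0) (F 1 - F 0 - 1 / 9) (F 2 - F 0 - 1 / 9) (F 0 - F 1 - F 2 + F 3) (1 / 9)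
        x := by
  simp only [Fin.sum_univ_four, bilinearWeight, quadratic, Matrix.cons_val]
  ring

variable {P : Measure E2}

theorem isSelfSimilar_of_carpetEq (hP : carpetEq P) :
    IsSelfSimilar P (fun k => (weight k / 8 : ℝ≥0∞)) S := by
  simpa [IsSelfSimilar, Fin.sum_univ_four, weight, carpetEq] using hP

theorem sum_weight : ∑ k, (weight k / 8 : ℝ≥0∞) = 1 := by
  have h : ∑ k, (weight k : ℝ≥0∞) = 8 := by rw [← Nat.cast_sum]; rfl
  simp only [div_eq_mul_inv, ← Finset.sum_mul, h]
  exact ENNReal.mul_inv_cancel (by norm_num) (by norm_num)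

theorem ae_mem_unitSq [IsFiniteMeasure P] (hP : carpetEq P) : ∀ᵐ x ∂P, x ∈ unitSq :=
  (isSelfSimilar_of_carpetEq hP).ae_mem sum_weight.le lipschitzWith_S
    (by rw [← NNReal.coe_lt_coe]; norm_num) unitSq_nonempty isCompact_unitSq.isClosed
    mapsTo_S_unitSq

theorem integrable_of_continuous [IsFiniteMeasure P] (hP : carpetEq P) {f : E2 → ℝ}
    (hf : Continuous f) : Integrable f P :=
  integrable_of_continuous_of_ae_mem_isCompact hf isCompact_unitSq (ae_mem_unitSq hP)

theorem integral_eq_sum_weight [IsFiniteMeasure P] (hP : carpetEq P) {f : E2 → ℝ}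
    (hf : Continuous f) : ∫ x, f x ∂P = ∑ k, (weight k / 8 : ℝ) * ∫ x, f (S k x) ∂P := by
  have hS (k : Fin 4) : Continuous (S k) := (lipschitzWith_S k).continuous
  rw [(isSelfSimilar_of_carpetEq hP).integral_eq_sum
    (fun k => ENNReal.div_ne_top (ENNReal.natCast_ne_top _) (by norm_num))
    (fun k => (hS k).measurable) hf.stronglyMeasurable
    fun k => integrable_of_continuous hP (hf.comp (hS k))]
  simp

variable [IsProbabilityMeasure P]

theorem integral_quadratic_eq_add (hP : carpetEq P) (a b c d e : ℝ) :
    ∫ x, quadratic a b c d e x ∂P = a + b * ∫ x, x 0 ∂P + c * ∫ x, x 1 ∂P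
      + d * ∫ x, x 0 * x 1 ∂P + e * ∫ x, (x 0 ^ 2 + x 1 ^ 2) ∂P := by
  have hint {f : E2 → ℝ} (hf : Continuous f) : Integrable f P := integrable_of_continuous hP hf
  simp only [quadratic]
  rw [integral_add, integral_add, integral_add, integral_add]
  · simp only [integral_const_mul, integral_const, probReal_univ, one_smul]
  all_goals exact hint (by fun_prop)

theorem integral_quadratic (hP : carpetEq P) (a b c d e : ℝ) :
    ∫ x, quadratic a b c d e x ∂P = a + b / 2 + 3 / 4 * c + 3 / 8 * d + 33 / 32 * e := by
  have hfix (a b c d e : ℝ) := integral_eq_sum_weight hP (continuous_quadratic a b c d e)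
  simp only [quadratic_S, integral_quadratic_eq_add hP, Fin.sum_univ_four] at hfix ⊢
  simp only [weight, cornerX, cornerY, quadratic, corner, Matrix.cons_val, PiLp.smul_apply,
    smul_eq_mul, pt_apply_zero, pt_apply_one, Nat.cast_one, Nat.cast_ofNat, Int.cast_zero,
    Int.cast_one] at hfix
  have h0 : ∫ x : E2, x 0 ∂P = 1 / 2 := by linarith [hfix 0 1 0 0 0]
  have h1 : ∫ x : E2, x 1 ∂P = 3 / 4 := by linarith [hfix 0 0 1 0 0]
  have h01 : ∫ x : E2, x 0 * x 1 ∂P = 3 / 8 := by linarith [hfix 0 0 0 1 0]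
  have hsq : ∫ x : E2, (x 0 ^ 2 + x 1 ^ 2) ∂P = 33 / 32 := by linarith [hfix 0 0 0 0 1]
  rw [h0, h1, h01, hsq]
  ring

theorem sum_corner_sub_le_integral (hP : carpetEq P) (k : Fin 4) (β : Finset E2)
    (hβ : β.Nonempty) :
    ∑ l, (weight l / 8 : ℝ) * nearestSqDist β hβ (S k (corner l)) - 7 / 288 ≤
      ∫ x, nearestSqDist β hβ (S k x) ∂P := by
  set F : Fin 4 → ℝ := fun l => nearestSqDist β hβ (S k (corner l))
  calc ∑ l, (weight l / 8 : ℝ) * F l - 7 / 288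
      = ∫ x, quadratic (F 0) (F 1 - F 0 - 1 / 9) (F 2 - F 0 - 1 / 9) (F 0 - F 1 - F 2 + F 3)
          (1 / 9) x ∂P := by
        rw [integral_quadratic hP]
        simp only [Fin.sum_univ_four, weight, Matrix.cons_val, Nat.cast_one, Nat.cast_ofNat]
        ring
    _ ≤ ∫ x, nearestSqDist β hβ (S k x) ∂P := by
        refine integral_mono_ae (integrable_of_continuous hP (continuous_quadratic ..))
          (integrable_of_continuous hP
            ((continuous_nearestSqDist β hβ).comp (lipschitzWith_S k).continuous)) ?_
        filter_upwards [ae_mem_unitSq hP] with x hx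
        have hcell := sum_mul_nearestSqDist_le (p := fun l => S k (corner l))
          (bilinearWeight_nonneg hx) (sum_bilinearWeight x) β hβ
        rw [sum_bilinearWeight_smul, sum_bilinearWeight_mul_norm_sq] at hcell
        rw [← sum_bilinearWeight_mul_sub_eq_quadratic]
        exact sub_le_iff_le_add.2 hcell

/-- The corner `l` of the first-level square `k`. -/
def gridPoint : Fin 4 × Fin 4 → E2 := fun (k, l) => S k (corner l)

theorem sum_gridPoint_sub_le_integral (hP : carpetEq P) (β : Finset E2) (hβ : β.Nonempty) :
    ∑ ω, (weight ω.1 * weight ω.2 / 64 : ℝ) * nearestSqDist β hβ (gridPoint ω) - 7 / 288 ≤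
      ∫ x, nearestSqDist β hβ x ∂P := by
  have hone : ∑ k, (weight k / 8 : ℝ) = 1 := by
    simp only [Fin.sum_univ_four, weight, Matrix.cons_val, Nat.cast_one, Nat.cast_ofNat]
    norm_num
  have hassoc (k l : Fin 4) (y : ℝ) :
      (weight k * weight l / 64 : ℝ) * y = weight k / 8 * (weight l / 8 * y) := by ring
  calc ∑ ω, (weight ω.1 * weight ω.2 / 64 : ℝ) * nearestSqDist β hβ (gridPoint ω) - 7 / 288
      = ∑ k, (weight k / 8 : ℝ) *
          (∑ l, (weight l / 8 : ℝ) * nearestSqDist β hβ (S k (corner l)) - 7 / 288) := by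
        simp only [Fintype.sum_prod_type, hassoc, gridPoint, mul_sub, Finset.sum_sub_distrib,
          ← Finset.sum_mul, hone, one_mul, Finset.mul_sum]
    _ ≤ ∑ k, (weight k / 8 : ℝ) * ∫ x, nearestSqDist β hβ (S k x) ∂P := by
        gcongr with k
        exact sum_corner_sub_le_integral hP k β hβ
    _ = ∫ x, nearestSqDist β hβ x ∂P :=
        (integral_eq_sum_weight hP (continuous_nearestSqDist β hβ)).symm

theorem integral_norm_S_sub_sq (hP : carpetEq P) (k : Fin 4) (c : E2) :
    ∫ x, ‖S k x - c‖ ^ 2 ∂P = 7 / 288 + ‖S k (pt (1 / 2) (3 / 4)) - c‖ ^ 2 := by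
  have hquad (x : E2) : ‖S k x - c‖ ^ 2 =
      quadratic (‖(2 / 3 : ℝ) • corner k - c‖ ^ 2) (2 / 3 * (2 / 3 * cornerX k - c 0))
        (2 / 3 * (2 / 3 * cornerY k - c 1)) 0 (1 / 9) x := by
    simp only [norm_sq_eq, quadratic, S_eq_pt, corner, PiLp.sub_apply, PiLp.smul_apply, smul_eq_mul,
      pt_apply_zero, pt_apply_one]
    ring
  simp only [hquad, integral_quadratic hP]
  simp only [norm_sq_eq, quadratic, corner, PiLp.sub_apply, PiLp.smul_apply, smul_eq_mul,
    pt_apply_zero, pt_apply_one]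
  ring

theorem integral_nearestSqDist_le (hP : carpetEq P) {β : Finset E2} (hβ : β.Nonempty)
    {c : Fin 4 → E2} (hc : ∀ k, c k ∈ β) :
    ∫ x, nearestSqDist β hβ x ∂P ≤
      ∑ k, (weight k / 8 : ℝ) * (7 / 288 + ‖S k (pt (1 / 2) (3 / 4)) - c k‖ ^ 2) := by
  have hcont := continuous_nearestSqDist β hβ
  rw [integral_eq_sum_weight hP hcont]
  gcongr with k
  have hS := (lipschitzWith_S k).continuous
  rw [← integral_norm_S_sub_sq hP]
  exact integral_mono (integrable_of_continuous hP (hcont.comp hS))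
    (integrable_of_continuous hP (by fun_prop)) fun x => β.inf'_le _ (hc k)

/-- The rents of the grid points: an optimal solution of the dual of the facility location linear
program with three centres, scaled to integers. -/
def rent : Fin 4 → Fin 4 → ℕ :=
  ![![20, 20, 35, 15], ![20, 20, 15, 35], ![15, 15, 50, 50], ![15, 15, 50, 50]]

/-- The grid points as sites, in coordinates scaled by `3`. The factor `4` in the masses makes the
optimal rents and the price `88` integral. -/
def gridSite (ω : Fin 4 × Fin 4) : Site where
  x := cornerX ω.2 + 2 * cornerX ω.1
  y := cornerY ω.2 + 2 * cornerY ω.1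
  mass := 4 * weight ω.1 * weight ω.2
  rent := rent ω.1 ω.2

theorem cost_gridSite (ω : Fin 4 × Fin 4) (c : E2) :
    (gridSite ω).cost (3 * c 0) (3 * c 1) =
      36 * (weight ω.1 * weight ω.2) * ‖gridPoint ω - c‖ ^ 2 := by
  simp only [Site.cost, gridSite, gridPoint, norm_sq_eq, S_eq_pt, corner, PiLp.sub_apply,
    pt_apply_zero, pt_apply_one]
  push_cast
  ring

theorem sum_rent_gridSite : ∑ ω, ((gridSite ω).rent : ℝ) = 440 := by
  rw [← Nat.cast_sum]; norm_cast

/-- The grid points in an order for which `Paraboloid.certify` prunes early. -/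
def visitOrder : List (Fin 4 × Fin 4) :=
  [(0, 2), (2, 2), (3, 2), (2, 3), (3, 3), (1, 3), (0, 0), (1, 1), (3, 1), (2, 0), (0, 1), (1, 0),
    (1, 2), (2, 1), (3, 0), (0, 3)]

theorem sum_map_visitOrder {M : Type*} [AddCommMonoid M] (f : Fin 4 × Fin 4 → M) :
    (visitOrder.map f).sum = ∑ ω, f ω := by
  rw [← List.sum_toFinset f (by decide : visitOrder.Nodup),
    (by decide : visitOrder.toFinset = Finset.univ)]

theorem certify_visitOrder :
    Paraboloid.certify (visitOrder.map gridSite) ⟨0, 0, 0, 88 - 440⟩ = true := by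
  decide +kernel

theorem sum_rent_sub_price_le_sum_min (c : E2) :
    ∑ ω, ((gridSite ω).rent : ℝ) - 88 ≤ ∑ ω, min ((gridSite ω).rent : ℝ)
      (36 * (weight ω.1 * weight ω.2) * ‖gridPoint ω - c‖ ^ 2) := by
  have hcert := Paraboloid.nonneg_of_certify certify_visitOrder (3 * c 0) (3 * c 1)
  simp only [List.map_map, sum_map_visitOrder, Function.comp_apply, cost_gridSite] at hcert
  have heval : (⟨0, 0, 0, 88 - 440⟩ : Paraboloid).eval (3 * c 0) (3 * c 1) = 88 - 440 := by
    norm_num [Paraboloid.eval]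
  rw [sum_rent_gridSite]
  linarith

theorem le_sum_gridPoint (β : Finset E2) (hβ : β.Nonempty) :
    (440 - β.card * 88) / 2304 ≤
      ∑ ω, (weight ω.1 * weight ω.2 / 64 : ℝ) * nearestSqDist β hβ (gridPoint ω) := by
  have hscale (ω : Fin 4 × Fin 4) : (weight ω.1 * weight ω.2 / 64 : ℝ) =
      36 * (weight ω.1 * weight ω.2) / 2304 := by ring
  simp only [hscale, div_mul_eq_mul_div, ← Finset.sum_div, ← sum_rent_gridSite]
  gcongr
  exact sum_rent_sub_card_mul_price_le_sum_mul_inf' sum_rent_sub_price_le_sum_min β hβ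

theorem le_integral_nearestSqDist (hP : carpetEq P) (β : Finset E2) (hβ : β.Nonempty) :
    (440 - β.card * 88) / 2304 - 7 / 288 ≤ ∫ x, nearestSqDist β hβ x ∂P :=
  (sub_le_sub_right (le_sum_gridPoint β hβ) _).trans (sum_gridPoint_sub_le_integral hP β hβ)

theorem le_integral_of_card_le_three (hP : carpetEq P) (β : Finset E2) (hβ : β.Nonempty)
    (hcard : β.card ≤ 3) :
    5 / 96 ≤ ∫ x, nearestSqDist β hβ x ∂P := by
  have hcard' : (β.card : ℝ) ≤ 3 := by exact_mod_cast hcard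
  linarith [le_integral_nearestSqDist hP β hβ]

end Carpet

theorem optimal_three_means (P : Measure E2) [IsProbabilityMeasure P] (hP : carpetEq P) :
    (∫ x : E2, min (‖x - pt (1/2) (1/4)‖^2)
        (min (‖x - pt (1/6) (11/12)‖^2) (‖x - pt (5/6) (11/12)‖^2)) ∂P = 5/96)
    ∧ ∀ (β : Finset E2) (hβ : β.Nonempty), β.card ≤ 3 →
        5/96 ≤ ∫ x : E2, β.inf' hβ (fun c => ‖x - c‖^2) ∂P := by
  classical
  have hne : ({pt (1/2) (1/4), pt (1/6) (11/12), pt (5/6) (11/12)} : Finset E2).Nonempty :=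
    Finset.insert_nonempty _ _
  have hmin (x : E2) : min (‖x - pt (1/2) (1/4)‖^2)
      (min (‖x - pt (1/6) (11/12)‖^2) (‖x - pt (5/6) (11/12)‖^2)) = nearestSqDist _ hne x := by
    simp [nearestSqDist]
  refine ⟨?_, le_integral_of_card_le_three hP⟩
  simp only [hmin]
  refine le_antisymm ?_ (le_integral_of_card_le_three hP _ hne Finset.card_le_three)
  refine (integral_nearestSqDist_le hP hne
    (c := ![pt (1/2) (1/4), pt (1/2) (1/4), pt (1/6) (11/12), pt (5/6) (11/12)]) ?_).trans_eq ?_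
  · simp [Fin.forall_fin_succ]
  · simp only [Fin.sum_univ_four, weight, norm_sq_eq, S, Matrix.cons_val, PiLp.sub_apply,
      pt_apply_zero, pt_apply_one, Nat.cast_one, Nat.cast_ofNat]
    norm_num
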